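/- For every integer n ≥ 1, the function p_n(t) = (1/t²) Σ_{k=1}^∞ (2πk)^{1-2n} ( 4πk/(t² + (2πk)²) + 8πkt/(t² + (2πk)²)² + ((2n-1)/(2πk)) · 2t/(t² + (2πk)²) ), t > 0, is completely monotonic on (0,∞). (Auxiliary positivity used in the proof: for every c ∈ [0,1] and every t > 0, t - sin t + c(1 - cos t - (t/2) sin t) ≥ 0.) -/

import Mathlib

open MeasureTheory Filter Set

/-- The Laplace transform of `g`. -/
noncomputable def LaplaceTransform (g : ℝ → ℝ) (x : ℝ) : ℝ :=
  ∫ t in Set.Ioi (0:ℝ), Real.exp (-x * t) * g t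

/-- `f` is completely monotonic on `(0,∞)`. -/
def CompletelyMonotonic (f : ℝ → ℝ) : Prop :=
  (∀ x : ℝ, 0 < x → ContDiffAt ℝ (⊤ : ℕ∞) f x) ∧
  ∀ (n : ℕ) (x : ℝ), 0 < x → 0 ≤ (-1 : ℝ) ^ n * iteratedDeriv n f x

/-- `f` is logarithmically completely monotonic on `(0,∞)`. -/
def LogCompletelyMonotonic (f : ℝ → ℝ) : Prop :=
  (∀ x : ℝ, 0 < x → 0 < f x) ∧ (∀ x : ℝ, 0 < x → ContDiffAt ℝ (⊤ : ℕ∞) f x) ∧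
  CompletelyMonotonic (fun x => -deriv f x / f x)

/-- `f` is a generalized Stieltjes function of order `lam` on `(0,∞)`. -/
def IsGenStieltjes (lam : ℝ) (f : ℝ → ℝ) : Prop :=
  ∃ (μ : Measure ℝ) (c : ℝ), 0 ≤ c ∧ μ (Set.Iio 0) = 0 ∧
    ∀ x : ℝ, 0 < x →
      Integrable (fun t => (x + t) ^ (-lam)) μ ∧
      f x = (∫ t, (x + t) ^ (-lam) ∂μ) + c

/-- Nielsen's beta function. -/
noncomputable def nielsenBeta (x : ℝ) : ℝ :=
  ∫ t in Set.Ioi (0:ℝ), Real.exp (-x * t) / (1 + Real.exp (-t))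

/-!
With `a = 2πk` and `m = 2n - 1`, the `k`-th summand divided by `t²` is the Laplace transform of an
explicit density built from `s`, `1 - cos (a * s)`, `sin (a * s)` and `s * sin (a * s)`. Grouped
suitably, that density is a positive combination of `1 - cos (a * s)` and of the auxiliary function
`x - sin x + c * (1 - cos x - x / 2 * sin x)` at `x = a * s`, `c = 2 / a`. Replacing `x` by
`sin x ≤ x` in the term `x * (1 - c / 2 * sin x)` bounds the auxiliary function below by
`c * (1 - cos x) ^ 2 / 2`. Hence the whole series is the Laplace transform of a positive measure,
and differentiating under the integral sign gives complete monotonicity.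
-/

lemma CompletelyMonotonic.congr {f g : ℝ → ℝ} (hf : CompletelyMonotonic f)
    (hfg : EqOn f g (Ioi 0)) : CompletelyMonotonic g := by
  have eventuallyEq {x : ℝ} (hx : 0 < x) : g =ᶠ[nhds x] f :=
    (hfg.eventuallyEq_of_mem (Ioi_mem_nhds hx)).symm
  refine ⟨fun x hx ↦ (hf.1 x hx).congr_of_eventuallyEq (eventuallyEq hx), fun n x hx ↦ ?_⟩
  rw [(eventuallyEq hx).iteratedDeriv_eq n]
  exact hf.2 n x hx

/-- The measure `μ` on `[0, ∞)` represents `f` on `(0, ∞)` as in Bernstein's theorem: `f` is there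
the (convergent) Laplace transform of `μ`. -/
def HasRepresentingMeasure (f : ℝ → ℝ) (μ : Measure ℝ) : Prop :=
  (∀ᵐ s ∂μ, 0 ≤ s) ∧ ∀ t, 0 < t →
    Integrable (fun s ↦ Real.exp (-t * s)) μ ∧ f t = ∫ s, Real.exp (-t * s) ∂μ

namespace HasRepresentingMeasure

lemma tsum {ι : Type*} [Countable ι] {f : ι → ℝ → ℝ} {μ : ι → Measure ℝ}
    (h : ∀ i, HasRepresentingMeasure (f i) (μ i))
    (hsum : ∀ t, 0 < t → Summable (f · t)) :
    HasRepresentingMeasure (fun t ↦ ∑' i, f i t) (Measure.sum μ) := by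
  refine ⟨Measure.ae_sum_iff.2 fun i ↦ (h i).1, fun t ht ↦ ?_⟩
  have integrable : Integrable (fun s ↦ Real.exp (-t * s)) (Measure.sum μ) := by
    refine integrable_sum_measure_iff.2 ⟨fun i ↦ ((h i).2 t ht).1, ?_⟩
    simpa only [Real.norm_eq_abs, Real.abs_exp, ← ((h _).2 t ht).2] using hsum t ht
  refine ⟨integrable, ?_⟩
  rw [integral_sum_measure integrable]
  exact tsum_congr fun i ↦ ((h i).2 t ht).2

lemma mem_interior_integrableExpSet_neg {f : ℝ → ℝ} {μ : Measure ℝ}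
    (h : HasRepresentingMeasure f μ) {t : ℝ} (ht : 0 < t) :
    t ∈ interior (ProbabilityTheory.integrableExpSet (fun s ↦ -s) μ) := by
  refine interior_maximal (fun u hu ↦ ?_) isOpen_Ioi ht
  simpa only [ProbabilityTheory.integrableExpSet, mem_ofPred_eq, mul_neg, neg_mul]
    using (h.2 u hu).1

lemma eqOn_mgf_neg {f : ℝ → ℝ} {μ : Measure ℝ} (h : HasRepresentingMeasure f μ) :
    EqOn (ProbabilityTheory.mgf (fun s ↦ -s) μ) f (Ioi 0) := fun t ht ↦ by
  simp only [(h.2 t ht).2, ProbabilityTheory.mgf, mul_neg, neg_mul]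

lemma completelyMonotonic {f : ℝ → ℝ} {μ : Measure ℝ} (h : HasRepresentingMeasure f μ) :
    CompletelyMonotonic f := by
  refine CompletelyMonotonic.congr ⟨fun x hx ↦ ?_, fun n x hx ↦ ?_⟩ h.eqOn_mgf_neg
  · exact (ProbabilityTheory.analyticAt_mgf (h.mem_interior_integrableExpSet_neg hx)).contDiffAt
  · rw [ProbabilityTheory.iteratedDeriv_mgf (h.mem_interior_integrableExpSet_neg hx),
      ← integral_const_mul]
    refine integral_nonneg_of_ae (h.1.mono fun s hs ↦ ?_)
    simp only [Pi.zero_apply, ← mul_assoc, ← mul_pow, neg_one_mul, neg_neg]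
    positivity

end HasRepresentingMeasure

/-- The Laplace integral of `g` at `t` converges absolutely and equals `L`; convergence is stated
separately because a divergent Bochner integral has the value `0`. -/
def HasLaplaceTransformAt (g : ℝ → ℝ) (t L : ℝ) : Prop :=
  IntegrableOn (fun s ↦ Real.exp (-t * s) * g s) (Ioi 0) ∧ LaplaceTransform g t = L

namespace HasLaplaceTransformAt

variable {g g₁ g₂ : ℝ → ℝ} {t L L₁ L₂ : ℝ}

lemma const_mul (c : ℝ) (h : HasLaplaceTransformAt g t L) :
    HasLaplaceTransformAt (fun s ↦ c * g s) t (c * L) := by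
  refine ⟨(h.1.const_mul c).congr (.of_forall fun _ ↦ mul_left_comm ..), ?_⟩
  simp only [LaplaceTransform, mul_left_comm _ c, integral_const_mul, ← h.2]

lemma add (h₁ : HasLaplaceTransformAt g₁ t L₁) (h₂ : HasLaplaceTransformAt g₂ t L₂) :
    HasLaplaceTransformAt (fun s ↦ g₁ s + g₂ s) t (L₁ + L₂) := by
  refine ⟨(h₁.1.add h₂.1).congr (.of_forall fun _ ↦ (mul_add ..).symm), ?_⟩
  simp only [LaplaceTransform, mul_add, integral_add h₁.1 h₂.1, ← h₁.2, ← h₂.2]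

lemma sub (h₁ : HasLaplaceTransformAt g₁ t L₁) (h₂ : HasLaplaceTransformAt g₂ t L₂) :
    HasLaplaceTransformAt (fun s ↦ g₁ s - g₂ s) t (L₁ - L₂) := by
  refine ⟨(h₁.1.sub h₂.1).congr (.of_forall fun _ ↦ (mul_sub ..).symm), ?_⟩
  simp only [LaplaceTransform, mul_sub, integral_sub h₁.1 h₂.1, ← h₁.2, ← h₂.2]

lemma aemeasurable (h : HasLaplaceTransformAt g t L) :
    AEMeasurable g (volume.restrict (Ioi 0)) := by
  have exp_measurable : Measurable fun s ↦ Real.exp (t * s) := by fun_prop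
  refine (exp_measurable.aemeasurable.mul h.1.aemeasurable).congr (.of_forall fun s ↦ ?_)
  simp only [Pi.mul_apply, ← mul_assoc, ← Real.exp_add, neg_mul, add_neg_cancel, Real.exp_zero,
    one_mul]

lemma hasRepresentingMeasure {F : ℝ → ℝ} (hg : ∀ s, 0 < s → 0 ≤ g s)
    (h : ∀ t, 0 < t → HasLaplaceTransformAt g t (F t)) :
    HasRepresentingMeasure F
      ((volume.restrict (Ioi 0)).withDensity fun s ↦ ENNReal.ofReal (g s)) := by
  have density_aemeasurable := (h 1 one_pos).aemeasurable.ennreal_ofReal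
  have density_lt_top : ∀ᵐ s ∂volume.restrict (Ioi 0), ENNReal.ofReal (g s) < ⊤ :=
    .of_forall fun _ ↦ ENNReal.ofReal_lt_top
  have density_smul_exp (t : ℝ) :
      (fun s ↦ (ENNReal.ofReal (g s)).toReal • Real.exp (-t * s)) =ᵐ[volume.restrict (Ioi 0)]
        fun s ↦ Real.exp (-t * s) * g s := by
    filter_upwards [ae_restrict_mem measurableSet_Ioi] with s hs
    rw [ENNReal.toReal_ofReal (hg s hs), smul_eq_mul, mul_comm]
  refine ⟨withDensity_absolutelyContinuous _ _ ?_, fun t ht ↦ ⟨?_, ?_⟩⟩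
  · exact (ae_restrict_mem measurableSet_Ioi).mono fun s hs ↦ le_of_lt hs
  · rw [integrable_withDensity_iff_integrable_smul₀' density_aemeasurable density_lt_top,
      integrable_congr (density_smul_exp t)]
    exact (h t ht).1
  · rw [integral_withDensity_eq_integral_toReal_smul₀ density_aemeasurable density_lt_top,
      integral_congr_ae (density_smul_exp t)]
    exact (h t ht).2.symm

end HasLaplaceTransformAt

lemma integrableOn_pow_mul_cexp_neg_mul (n : ℕ) {z : ℂ} (hz : 0 < z.re) :
    IntegrableOn (fun s : ℝ ↦ (s : ℂ) ^ n * Complex.exp (-z * s)) (Ioi 0) := by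
  have norm_integrable : IntegrableOn (fun s : ℝ ↦ s ^ n * Real.exp (-z.re * s)) (Ioi 0) := by
    simpa only [Real.rpow_natCast, Real.rpow_one] using
      integrableOn_rpow_mul_exp_neg_mul_rpow (p := 1) (s := n)
        (neg_one_lt_zero.trans_le n.cast_nonneg) one_pos hz
  refine norm_integrable.mono' (by fun_prop) ?_
  filter_upwards [ae_restrict_mem measurableSet_Ioi] with s hs
  simp [Complex.norm_exp, abs_of_pos (mem_Ioi.1 hs)]

lemma hasDerivAt_pow_succ_mul_cexp_neg_mul (n : ℕ) (z : ℂ) (s : ℝ) :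
    HasDerivAt (fun s : ℝ ↦ (s : ℂ) ^ (n + 1) * Complex.exp (-z * s))
      ((n + 1) * ((s : ℂ) ^ n * Complex.exp (-z * s)) -
        z * ((s : ℂ) ^ (n + 1) * Complex.exp (-z * s))) s := by
  have product_rule := ((hasDerivAt_pow (n + 1) (s : ℂ)).mul
    ((hasDerivAt_id (s : ℂ)).const_mul (-z)).cexp).comp_ofReal
  refine product_rule.congr_deriv ?_
  simp only [id]
  push_cast
  ring

lemma integral_pow_mul_cexp_neg_mul (n : ℕ) {z : ℂ} (hz : 0 < z.re) :
    ∫ s in Ioi (0 : ℝ), (s : ℂ) ^ n * Complex.exp (-z * s) = n.factorial / z ^ (n + 1) := by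
  have hz0 : z ≠ 0 := by rintro rfl; simp at hz
  induction n with
  | zero =>
    simpa using integral_exp_mul_complex_Ioi (a := -z) (by simpa using hz) 0
  | succ n ih =>
    have integrable_n := (integrableOn_pow_mul_cexp_neg_mul n hz).const_mul ((n : ℂ) + 1)
    have integrable_succ := integrableOn_pow_mul_cexp_neg_mul (n + 1) hz
    have integrable_deriv := integrable_n.sub (integrable_succ.const_mul z)
    have has_deriv (s : ℝ) (_ : s ∈ Ioi 0) := hasDerivAt_pow_succ_mul_cexp_neg_mul n z s
    have integral_deriv := integral_Ioi_of_hasDerivAt_of_tendsto'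
      (fun s _ ↦ hasDerivAt_pow_succ_mul_cexp_neg_mul n z s) integrable_deriv
      (tendsto_zero_of_hasDerivAt_of_integrableOn_Ioi has_deriv integrable_deriv integrable_succ)
    have recursion : (n + 1) * (n.factorial / z ^ (n + 1)) =
        z * ∫ s in Ioi (0 : ℝ), (s : ℂ) ^ (n + 1) * Complex.exp (-z * s) := by
      rwa [integral_sub integrable_n (integrable_succ.const_mul z), integral_const_mul,
        integral_const_mul, ih, Complex.ofReal_zero, zero_pow n.succ_ne_zero, zero_mul, sub_zero,
        sub_eq_zero] at integral_deriv
    rw [← mul_right_inj' hz0, ← recursion, Nat.factorial_succ]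
    push_cast
    field_simp
    ring

lemma re_pow_mul_cexp_neg_mul (n : ℕ) (a t s : ℝ) :
    ((s : ℂ) ^ n * Complex.exp (-(t - a * Complex.I) * s)).re =
      Real.exp (-t * s) * (s ^ n * Real.cos (a * s)) := by
  rw [← Complex.ofReal_pow, Complex.re_ofReal_mul, Complex.exp_re]
  simp only [neg_sub, Complex.mul_re, Complex.sub_re, Complex.ofReal_re, Complex.I_re, mul_zero,
    Complex.ofReal_im, Complex.I_im, mul_one, sub_self, zero_sub, neg_mul, Complex.sub_im,
    Complex.mul_im, add_zero, sub_zero, zero_add]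
  ring

lemma im_pow_mul_cexp_neg_mul (n : ℕ) (a t s : ℝ) :
    ((s : ℂ) ^ n * Complex.exp (-(t - a * Complex.I) * s)).im =
      Real.exp (-t * s) * (s ^ n * Real.sin (a * s)) := by
  rw [← Complex.ofReal_pow, Complex.im_ofReal_mul, Complex.exp_im]
  simp only [neg_sub, Complex.mul_re, Complex.sub_re, Complex.ofReal_re, Complex.I_re, mul_zero,
    Complex.ofReal_im, Complex.I_im, mul_one, sub_self, zero_sub, neg_mul, Complex.sub_im,
    Complex.mul_im, add_zero, sub_zero, zero_add]
  ring

section Trigonometric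

variable (n : ℕ) (a : ℝ) {t : ℝ}

lemma hasLaplaceTransformAt_pow_mul_cos (ht : 0 < t) :
    HasLaplaceTransformAt (fun s ↦ s ^ n * Real.cos (a * s)) t
      (n.factorial / (t - a * Complex.I) ^ (n + 1)).re := by
  have hre : 0 < ((t : ℂ) - a * Complex.I).re := by simpa
  have integrable := integrableOn_pow_mul_cexp_neg_mul n hre
  constructor
  · simpa only [IntegrableOn, RCLike.re_eq_complex_re, re_pow_mul_cexp_neg_mul] using integrable.re
  · rw [← integral_pow_mul_cexp_neg_mul n hre, ← RCLike.re_eq_complex_re, ← integral_re integrable]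
    simp only [RCLike.re_eq_complex_re, re_pow_mul_cexp_neg_mul, LaplaceTransform]

lemma hasLaplaceTransformAt_pow_mul_sin (ht : 0 < t) :
    HasLaplaceTransformAt (fun s ↦ s ^ n * Real.sin (a * s)) t
      (n.factorial / (t - a * Complex.I) ^ (n + 1)).im := by
  have hre : 0 < ((t : ℂ) - a * Complex.I).re := by simpa
  have integrable := integrableOn_pow_mul_cexp_neg_mul n hre
  constructor
  · simpa only [IntegrableOn, RCLike.im_eq_complex_im, im_pow_mul_cexp_neg_mul] using integrable.im
  · rw [← integral_pow_mul_cexp_neg_mul n hre, ← RCLike.im_eq_complex_im, ← integral_im integrable]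
    simp only [RCLike.im_eq_complex_im, im_pow_mul_cexp_neg_mul, LaplaceTransform]

lemma hasLaplaceTransformAt_pow (ht : 0 < t) :
    HasLaplaceTransformAt (fun s ↦ s ^ n) t (n.factorial / t ^ (n + 1)) := by
  have h := hasLaplaceTransformAt_pow_mul_cos n 0 ht
  have value : ((n.factorial : ℂ) / ((t : ℂ) - (0 : ℝ) * Complex.I) ^ (n + 1)).re =
      n.factorial / t ^ (n + 1) := by
    rw [Complex.ofReal_zero, zero_mul, sub_zero]
    exact_mod_cast Complex.ofReal_re (n.factorial / t ^ (n + 1))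
  simpa only [value, zero_mul, Real.cos_zero, mul_one] using h

lemma hasLaplaceTransformAt_cos (ht : 0 < t) :
    HasLaplaceTransformAt (fun s ↦ Real.cos (a * s)) t (t / (t ^ 2 + a ^ 2)) := by
  simpa [Complex.normSq_apply, ← sq] using hasLaplaceTransformAt_pow_mul_cos 0 a ht

lemma hasLaplaceTransformAt_sin (ht : 0 < t) :
    HasLaplaceTransformAt (fun s ↦ Real.sin (a * s)) t (a / (t ^ 2 + a ^ 2)) := by
  simpa [Complex.normSq_apply, ← sq] using hasLaplaceTransformAt_pow_mul_sin 0 a ht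

lemma hasLaplaceTransformAt_mul_sin (ht : 0 < t) :
    HasLaplaceTransformAt (fun s ↦ s * Real.sin (a * s)) t (2 * a * t / (t ^ 2 + a ^ 2) ^ 2) := by
  convert hasLaplaceTransformAt_pow_mul_sin 1 a ht using 1
  · simp only [pow_one]
  · simp only [pow_two, Nat.factorial_one, Nat.cast_one, Nat.reduceAdd, one_div, mul_inv_rev,
      Complex.mul_im, Complex.inv_re, Complex.sub_re, Complex.ofReal_re, Complex.mul_re,
      Complex.I_re, mul_zero, Complex.ofReal_im, Complex.I_im, mul_one, sub_self, sub_zero,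
      Complex.normSq_apply, Complex.sub_im, add_zero, zero_sub, mul_neg, neg_mul, neg_neg,
      Complex.inv_im]
    field_simp
    ring

end Trigonometric

lemma sub_sin_add_mul_nonneg {c t : ℝ} (hc₀ : 0 ≤ c) (hc₂ : c ≤ 2) (ht : 0 ≤ t) :
    0 ≤ t - Real.sin t + c * (1 - Real.cos t - t / 2 * Real.sin t) := by
  have factor_nonneg : 0 ≤ 1 - c / 2 * Real.sin t := by
    nlinarith [Real.sin_le_one t]
  calc
    0 ≤ c * (1 - Real.cos t) ^ 2 / 2 := by positivity
    _ = Real.sin t * (1 - c / 2 * Real.sin t) - Real.sin t + c * (1 - Real.cos t) := by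
      linear_combination c / 2 * Real.sin_sq_add_cos_sq t
    _ ≤ t * (1 - c / 2 * Real.sin t) - Real.sin t + c * (1 - Real.cos t) := by
      gcongr
      exact Real.sin_le ht
    _ = t - Real.sin t + c * (1 - Real.cos t - t / 2 * Real.sin t) := by ring

/-- The summand of `pₙ` at `a = 2πk` and `m = 2n - 1`, divided by `t ^ 2` and without its weight
`a ^ (1 - 2 * n)`. -/
noncomputable def barnesTerm (a m t : ℝ) : ℝ :=
  1 / t ^ 2 * (2 * a / (t ^ 2 + a ^ 2) + 4 * a * t / (t ^ 2 + a ^ 2) ^ 2 +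
    m / a * (2 * t / (t ^ 2 + a ^ 2)))

/-- The inverse Laplace transform of `barnesTerm a m`, grouped so that its positivity is visible. -/
noncomputable def barnesDensity (a m s : ℝ) : ℝ :=
  2 / a ^ 2 * ((a * s - Real.sin (a * s) +
    2 / a * (1 - Real.cos (a * s) - a * s / 2 * Real.sin (a * s))) +
      m / a * (1 - Real.cos (a * s)))

section Barnes

variable {a m t : ℝ}

lemma barnesDensity_nonneg (ha : 1 ≤ a) (hm : 0 ≤ m) {s : ℝ} (hs : 0 ≤ s) :
    0 ≤ barnesDensity a m s := by
  have main_nonneg := sub_sin_add_mul_nonneg (c := 2 / a) (by positivity)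
    (div_le_self zero_le_two ha) (t := a * s) (by positivity)
  have one_sub_cos_nonneg : 0 ≤ 1 - Real.cos (a * s) := sub_nonneg.2 (Real.cos_le_one _)
  unfold barnesDensity
  positivity

lemma hasLaplaceTransformAt_barnesDensity (ha : a ≠ 0) (m : ℝ) (ht : 0 < t) :
    HasLaplaceTransformAt (barnesDensity a m) t (barnesTerm a m t) := by
  have one_sub_cos := (hasLaplaceTransformAt_pow 0 ht).sub (hasLaplaceTransformAt_cos a ht)
  have h := ((((hasLaplaceTransformAt_pow 1 ht).const_mul (2 / a)).sub
    ((hasLaplaceTransformAt_sin a ht).const_mul (2 / a ^ 2))).add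
      (one_sub_cos.const_mul ((4 + 2 * m) / a ^ 3))).sub
        ((hasLaplaceTransformAt_mul_sin a ht).const_mul (2 / a ^ 2))
  convert h using 1
  · funext s
    unfold barnesDensity
    field_simp
    ring
  · simp only [barnesTerm, Nat.factorial_one, Nat.cast_one, Nat.reduceAdd, Nat.factorial_zero,
      zero_add, pow_one]
    field_simp
    ring

lemma barnesTerm_nonneg (ha : 0 ≤ a) (hm : 0 ≤ m) (ht : 0 ≤ t) : 0 ≤ barnesTerm a m t := by
  unfold barnesTerm
  positivity

lemma barnesTerm_le (ha : 1 ≤ a) (hm : 0 ≤ m) (ht : 0 < t) :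
    barnesTerm a m t ≤ (4 + m) / t ^ 2 / a := by
  have ha₀ : 0 < a := by linarith
  have am_gm : 2 * a * t ≤ t ^ 2 + a ^ 2 := by linarith [two_mul_le_add_sq t a]
  have first_le : 2 * a / (t ^ 2 + a ^ 2) ≤ 2 / a := by
    rw [div_le_div_iff₀ (by positivity) ha₀]
    nlinarith [sq_nonneg t]
  have ratio_le_one : 2 * t / (t ^ 2 + a ^ 2) ≤ 1 := by
    rw [div_le_one (by positivity)]
    nlinarith
  calc
    barnesTerm a m t = 1 / t ^ 2 * (2 * a / (t ^ 2 + a ^ 2) +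
        2 * a / (t ^ 2 + a ^ 2) * (2 * t / (t ^ 2 + a ^ 2)) +
        m / a * (2 * t / (t ^ 2 + a ^ 2))) := by
      unfold barnesTerm
      field_simp
      ring
    _ ≤ 1 / t ^ 2 * (2 / a + 2 / a * 1 + m / a * 1) := by
      gcongr
    _ = (4 + m) / t ^ 2 / a := by ring

end Barnes

lemma completelyMonotonic_tsum_mul_barnesTerm {ι : Type*} [Countable ι] {a w : ι → ℝ} {m : ℝ}
    (ha : ∀ i, 1 ≤ a i) (hw : ∀ i, 0 ≤ w i) (hm : 0 ≤ m) (hsum : Summable fun i ↦ w i / a i) :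
    CompletelyMonotonic fun t ↦ ∑' i, w i * barnesTerm (a i) m t := by
  have a_pos (i : ι) : 0 < a i := one_pos.trans_le (ha i)
  have summable (t : ℝ) (ht : 0 < t) : Summable fun i ↦ w i * barnesTerm (a i) m t := by
    refine (hsum.mul_left ((4 + m) / t ^ 2)).of_nonneg_of_le
      (fun i ↦ mul_nonneg (hw i) (barnesTerm_nonneg (a_pos i).le hm ht.le)) fun i ↦ ?_
    calc
      w i * barnesTerm (a i) m t ≤ w i * ((4 + m) / t ^ 2 / a i) :=
        mul_le_mul_of_nonneg_left (barnesTerm_le (ha i) hm ht) (hw i)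
      _ = (4 + m) / t ^ 2 * (w i / a i) := by ring
  have represented (i : ι) := HasLaplaceTransformAt.hasRepresentingMeasure
    (fun s hs ↦ mul_nonneg (hw i) (barnesDensity_nonneg (ha i) hm hs.le))
    fun t ht ↦ (hasLaplaceTransformAt_barnesDensity (a_pos i).ne' m ht).const_mul (w i)
  exact (HasRepresentingMeasure.tsum represented summable).completelyMonotonic

open Real in
lemma summable_two_pi_mul_succ_rpow_div {ν : ℝ} (hν : 1 / 2 < ν) :
    Summable fun k : ℕ ↦ (2 * π * ((k : ℝ) + 1)) ^ (1 - 2 * ν) / (2 * π * ((k : ℝ) + 1)) := by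
  have p_series := (summable_one_div_nat_add_rpow 1 (2 * ν)).2 (by linarith)
  refine (p_series.mul_left ((2 * π) ^ (-(2 * ν)))).congr fun k ↦ ?_
  have hk : (0 : ℝ) < k + 1 := by positivity
  rw [← rpow_sub_one (by positivity), sub_sub_cancel_left, mul_rpow (by positivity) hk.le,
    rpow_neg hk.le, abs_of_pos hk, one_div]

open Real in
theorem stmt18_general (ν : ℝ) (hν : 1 / 2 < ν) :
    CompletelyMonotonic (fun t =>
      (1 / t ^ 2) * ∑' k : ℕ,
        (2 * π * ((k : ℝ) + 1)) ^ (1 - 2 * ν) *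
          (4 * π * ((k : ℝ) + 1) / (t ^ 2 + (2 * π * ((k : ℝ) + 1)) ^ 2)
            + 8 * π * ((k : ℝ) + 1) * t / (t ^ 2 + (2 * π * ((k : ℝ) + 1)) ^ 2) ^ 2
            + ((2 * ν - 1) / (2 * π * ((k : ℝ) + 1))) *
                (2 * t / (t ^ 2 + (2 * π * ((k : ℝ) + 1)) ^ 2)))) ∧
    ∀ c : ℝ, 0 ≤ c → c ≤ 2 → ∀ t : ℝ, 0 ≤ t →
      0 ≤ t - Real.sin t + c * (1 - Real.cos t - (t / 2) * Real.sin t) := by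
  refine ⟨?_, fun c hc₀ hc₂ t ht ↦ sub_sin_add_mul_nonneg hc₀ hc₂ ht⟩
  have one_le (k : ℕ) : 1 ≤ 2 * π * ((k : ℝ) + 1) := by
    nlinarith [pi_gt_three, k.cast_nonneg (α := ℝ)]
  have h := completelyMonotonic_tsum_mul_barnesTerm one_le (fun k ↦ by positivity)
    (by linarith : 0 ≤ 2 * ν - 1) (summable_two_pi_mul_succ_rpow_div hν)
  refine h.congr fun t _ ↦ ?_
  simp only [← tsum_mul_left, barnesTerm]
  exact tsum_congr fun k ↦ by ring

open Real in
/-- Theorem: for every `n ≥ 1` the function `pₙ` appearing in the remainder of the asymptotic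
expansion of the double Gamma function of Barnes is completely monotonic; together with the
auxiliary positivity `t - sin t + c(1 - cos t - (t/2) sin t) ≥ 0` for `c ∈ [0,1]`, `t > 0`. -/
theorem stmt18 (n : ℕ) (hn : 1 ≤ n) :
    CompletelyMonotonic (fun t =>
      (1 / t ^ 2) * ∑' k : ℕ,
        (2 * π * ((k : ℝ) + 1)) ^ ((1 : ℤ) - 2 * (n : ℤ)) *
          (4 * π * ((k : ℝ) + 1) / (t ^ 2 + (2 * π * ((k : ℝ) + 1)) ^ 2)
            + 8 * π * ((k : ℝ) + 1) * t / (t ^ 2 + (2 * π * ((k : ℝ) + 1)) ^ 2) ^ 2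
            + ((2 * (n : ℝ) - 1) / (2 * π * ((k : ℝ) + 1))) *
                (2 * t / (t ^ 2 + (2 * π * ((k : ℝ) + 1)) ^ 2)))) ∧
    ∀ c : ℝ, 0 ≤ c → c ≤ 1 → ∀ t : ℝ, 0 < t →
      0 ≤ t - Real.sin t + c * (1 - Real.cos t - (t / 2) * Real.sin t) := by
  obtain ⟨cm, nonneg⟩ := stmt18_general n (by linarith [Nat.one_le_cast (α := ℝ).2 hn])
  exact ⟨by exact_mod_cast cm, fun c hc₀ hc₁ t ht ↦ nonneg c hc₀ (by linarith) t ht.le⟩
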